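/- Let ξ ≠ 0, γ ≥ 1, λ > 0, a₀ > 0, b₀ > 0, a₁, b₁ ∈ ℝ. Then the solution of the Emden system a''(t) − ξ²/a(t)³ = λ/(a(t)^{2γ−1} b(t)^{γ−1}), b''(t) = λ/(a(t)^{2γ−2} b(t)^{γ}), a(0) = a₀, a'(0) = a₁, b(0) = b₀, b'(0) = b₁ is global: there exist C² functions a, b : [0,∞) → ℝ with a(t) > 0 and b(t) > 0 for all t ≥ 0 satisfying the system and the initial conditions. -/

import Mathlib

open Set Filter Topology NNReal

lemma emden_trunc {E : Type*} [NormedAddCommGroup E] [NormedSpace ℝ E] [CompleteSpace E]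
    (v : E → E) (K : Set E) (ρ : E → E) (C B : ℝ≥0) (T : ℝ) (hT : 0 ≤ T)
    (hclosed : IsClosed K)
    (hL : LipschitzOnWith C v K) (hB : ∀ x ∈ K, ‖v x‖ ≤ B)
    (hρ : LipschitzWith 1 ρ) (hρK : ∀ x, ρ x ∈ K) (hρid : ∀ x ∈ K, ρ x = x)
    (x0 : E) (hx0 : x0 ∈ K)
    (hap : ∀ (γ : ℝ → E) (s : ℝ), 0 ≤ s → s ≤ T → γ 0 = x0 → (∀ t ∈ Icc 0 s, γ t ∈ K) →
      (∀ t ∈ Icc 0 s, HasDerivWithinAt γ (v (γ t)) (Icc 0 s) t) → K ∈ 𝓝 (γ s)) :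
    ∃ γ : ℝ → E, γ 0 = x0 ∧ (∀ t ∈ Icc 0 T, γ t ∈ K) ∧
      ∀ t ∈ Icc 0 T, HasDerivWithinAt γ (v (γ t)) (Icc 0 T) t := by
  have hlip : LipschitzWith C (fun x => v (ρ x)) := by
    have := hL.comp (hρ.lipschitzOnWith (s := univ)) (fun x _ => hρK x)
    rw [mul_one, lipschitzOnWith_univ] at this
    exact this
  have hPL : IsPicardLindelof (fun (_ : ℝ) x => v (ρ x)) (tmin := 0) (tmax := T)
      ⟨0, le_refl _, hT⟩ x0 (B * ⟨T, hT⟩) 0 B C := by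
    refine ⟨fun t _ => hlip.lipschitzOnWith, fun x _ => continuousOn_const,
      fun t _ x _ => hB _ (hρK x), ?_⟩
    simp [hT]
    exact le_rfl
  obtain ⟨γ, h0, hγ⟩ := hPL.exists_eq_forall_mem_Icc_hasDerivWithinAt₀
  simp only at h0 hγ
  have hcont : ContinuousOn γ (Icc 0 T) := fun t ht => (hγ t ht).continuousWithinAt
  have key : Icc 0 T ⊆ γ ⁻¹' K := by
    apply IsClosed.Icc_subset_of_forall_mem_nhdsGT_of_Icc_subset
    · rw [inter_comm]
      exact hcont.preimage_isClosed_of_isClosed isClosed_Icc hclosed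
    · simpa [h0] using hx0
    · intro t ht hs
      have h1 : K ∈ 𝓝 (γ t) := by
        apply hap γ t ht.1 ht.2.le h0 (fun τ hτ => hs hτ)
        intro τ hτ
        have := (hγ τ ⟨hτ.1, hτ.2.trans ht.2.le⟩).mono (Icc_subset_Icc_right ht.2.le)
        rwa [hρid _ (hs hτ)] at this
      have h2 := hcont t ⟨ht.1, ht.2.le⟩ h1
      have h3 : 𝓝[>] t ≤ 𝓝[Icc 0 T] t := by
        rw [← nhdsWithin_Ioc_eq_nhdsGT ht.2]
        exact nhdsWithin_mono _ (fun x hx => ⟨ht.1.trans hx.1.le, hx.2⟩)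
      exact h3 h2
  refine ⟨γ, h0, key, fun t ht => ?_⟩
  have := hγ t ht
  rwa [hρid _ (key ht)] at this

lemma emden_glue {E : Type*} [NormedAddCommGroup E] [NormedSpace ℝ E]
    (v : E → E) (K : ℕ → Set E) (C : ℕ → ℝ≥0) (hK : Monotone K)
    (hL : ∀ n, LipschitzOnWith (C n) v (K n)) (x0 : E)
    (h : ∀ n : ℕ, ∃ γ : ℝ → E, γ 0 = x0 ∧ (∀ t ∈ Icc 0 (n : ℝ), γ t ∈ K n) ∧
      ∀ t ∈ Icc 0 (n : ℝ), HasDerivWithinAt γ (v (γ t)) (Icc 0 (n : ℝ)) t) :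
    ∃ γ : ℝ → E, γ 0 = x0 ∧ ∀ t, 0 ≤ t → (∃ n, γ t ∈ K n) ∧
      HasDerivWithinAt γ (v (γ t)) (Ici 0) t := by
  choose g g0 gK gd using h
  have uniq : ∀ m n : ℕ, m ≤ n → EqOn (g m) (g n) (Icc 0 (m : ℝ)) := by
    intro m n hmn
    have hmn' : (m : ℝ) ≤ n := by exact_mod_cast hmn
    have hr : ∀ (k : ℕ), m ≤ k → ∀ t ∈ Ico 0 (m : ℝ),
        HasDerivWithinAt (g k) (v (g k t)) (Ici t) t := by
      intro k hk t ht
      have hk' : (m : ℝ) ≤ k := by exact_mod_cast hk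
      refine ((gd k t ⟨ht.1, ht.2.le.trans hk'⟩).mono_of_mem_nhdsWithin ?_)
      exact mem_of_superset (Icc_mem_nhdsGE (ht.2.trans_le hk')) (Icc_subset_Icc_left ht.1)
    have hc : ∀ (k : ℕ), m ≤ k → ContinuousOn (g k) (Icc 0 (m : ℝ)) := by
      intro k hk t ht
      have hk' : (m : ℝ) ≤ k := by exact_mod_cast hk
      exact ((gd k t ⟨ht.1, ht.2.trans hk'⟩).continuousWithinAt).mono (Icc_subset_Icc_right hk')
    exact ODE_solution_unique_of_mem_Icc_right (v := fun _ => v) (s := fun _ => K n)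
      (fun t _ => hL n) (hc m le_rfl) (hr m le_rfl)
      (fun t ht => hK hmn (gK m t ⟨ht.1, ht.2.le⟩)) (hc n hmn) (hr n hmn)
      (fun t ht => gK n t ⟨ht.1, ht.2.le.trans hmn'⟩) (by rw [g0, g0])
  have heq : ∀ n : ℕ, EqOn (fun t => g ⌈t⌉₊ t) (g n) (Icc 0 (n : ℝ)) := by
    intro n t ht
    exact uniq _ _ (Nat.ceil_le.2 ht.2) ⟨ht.1, Nat.le_ceil t⟩
  refine ⟨fun t => g ⌈t⌉₊ t, by simp [g0], fun t ht => ?_⟩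
  have hmem : t ∈ Icc 0 ((⌈t⌉₊ : ℕ) : ℝ) := ⟨ht, Nat.le_ceil t⟩
  refine ⟨⟨_, gK _ t hmem⟩, ?_⟩
  have hlt : t < ((⌈t⌉₊ + 1 : ℕ) : ℝ) := by
    push_cast; linarith [Nat.le_ceil t]
  have hmem' : t ∈ Icc 0 ((⌈t⌉₊ + 1 : ℕ) : ℝ) := ⟨ht, hlt.le⟩
  have h1 := (gd _ t hmem').congr_of_mem (heq _) hmem'
  have e := heq _ hmem'
  simp only at e
  rw [← e] at h1
  refine h1.mono_of_mem_nhdsWithin ?_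
  have : Iic (((⌈t⌉₊ + 1 : ℕ) : ℝ)) ∈ 𝓝 t := Iic_mem_nhds hlt
  exact mem_of_superset (inter_mem_nhdsWithin _ this) (fun x hx => ⟨hx.1, hx.2⟩)

lemma emden_F (γ : ℝ) (hγ : 1 ≤ γ) : ∃ F : ℝ → ℝ,
    (∀ u, 0 < u → HasDerivAt F (-(u ^ (-γ))) u) ∧ ∀ u, 0 < u → -Real.log u ≤ F u := by
  rcases hγ.eq_or_lt with rfl | h
  · refine ⟨fun u => -Real.log u, fun u hu => ?_, fun u _ => le_rfl⟩
    rw [Real.rpow_neg_one]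
    exact (Real.hasDerivAt_log hu.ne').neg
  · have h1 : 0 < γ - 1 := by linarith
    refine ⟨fun u => (u ^ (1 - γ) - 1) / (γ - 1), fun u hu => ?_, fun u hu => ?_⟩
    · have := ((Real.hasDerivAt_rpow_const (p := 1 - γ) (Or.inl hu.ne')).sub_const 1).div_const
        (γ - 1)
      refine this.congr_deriv ?_
      rw [show 1 - γ - 1 = -γ by ring]
      field_simp
      ring
    · rw [le_div_iff₀ h1, Real.rpow_def_of_pos hu]
      nlinarith [Real.add_one_le_exp (Real.log u * (1 - γ))]

lemma emden_anti (f f' : ℝ → ℝ) (s : ℝ) (hs : 0 ≤ s)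
    (hf : ∀ t ∈ Icc 0 s, HasDerivWithinAt f (f' t) (Icc 0 s) t) (h : ∀ t ∈ Icc 0 s, f' t ≤ 0) :
    ∀ t ∈ Icc 0 s, f t ≤ f 0 := by
  intro t ht
  refine antitoneOn_of_hasDerivWithinAt_nonpos (convex_Icc 0 s)
    (fun t ht => (hf t ht).continuousWithinAt)
    (fun t ht => (hf t (interior_subset ht)).mono interior_subset)
    (fun t ht => h t (interior_subset ht)) ⟨le_rfl, hs⟩ ht ht.1

set_option maxHeartbeats 1000000 in
lemma emden_apriori (ξ lam γ a₀ a₁ b₀ b₁ : ℝ)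
    (hξ : ξ ≠ 0) (hγ : 1 ≤ γ) (hlam : 0 < lam) (ha₀ : 0 < a₀) (hb₀ : 0 < b₀) (T : ℝ) :
    ∃ R : ℝ, 1 ≤ R ∧ ∀ (a p b q : ℝ → ℝ) (s : ℝ), 0 ≤ s → s ≤ T →
      a 0 = a₀ → p 0 = a₁ → b 0 = b₀ → q 0 = b₁ →
      (∀ t ∈ Icc 0 s, 0 < a t ∧ 0 < b t) →
      (∀ t ∈ Icc 0 s, HasDerivWithinAt a (p t) (Icc 0 s) t) →
      (∀ t ∈ Icc 0 s, HasDerivWithinAt p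
        (ξ ^ 2 / (a t) ^ 3 + lam / ((a t) ^ (2 * γ - 1) * (b t) ^ (γ - 1))) (Icc 0 s) t) →
      (∀ t ∈ Icc 0 s, HasDerivWithinAt b (q t) (Icc 0 s) t) →
      (∀ t ∈ Icc 0 s, HasDerivWithinAt q
        (lam / ((a t) ^ (2 * γ - 2) * (b t) ^ γ)) (Icc 0 s) t) →
      R⁻¹ < a s ∧ a s < R ∧ |p s| < R ∧ R⁻¹ < b s ∧ b s < R ∧ |q s| < R := by
  obtain ⟨F, hF, hFlog⟩ := emden_F γ hγ
  set e := |a₁ ^ 2 + b₁ ^ 2 / 2 + ξ ^ 2 / a₀ ^ 2 + lam * F (a₀ ^ 2 * b₀)| with he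
  have he0 : 0 ≤ e := abs_nonneg _
  set D := a₀ + b₀ + (2 + e) / (2 * lam) with hD
  have hD0 : 0 < D := by positivity
  set M := D * Real.exp (2 * lam * T) with hM
  have hM0 : 0 < M := by positivity
  set P := e + 2 * lam * M with hP
  have hP0 : 0 < P := by positivity
  have hξ2 : 0 < ξ ^ 2 := by positivity
  refine ⟨2 + M + 2 * P + P / ξ ^ 2 + M ^ 2 * Real.exp (e / lam), ?_, ?_⟩
  · have : 0 < M + 2 * P + P / ξ ^ 2 + M ^ 2 * Real.exp (e / lam) := by positivity
    linarith
  intro a p b q s hs hsT ea ep eb eq hpos hda hdp hdb hdq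
  -- energy
  have energy : ∀ t ∈ Icc 0 s,
      p t ^ 2 + q t ^ 2 / 2 + ξ ^ 2 / a t ^ 2 + lam * F (a t ^ 2 * b t) ≤ e := by
    intro t ht
    have h0 : (fun t => p t ^ 2 + q t ^ 2 / 2 + ξ ^ 2 / a t ^ 2 + lam * F (a t ^ 2 * b t)) 0 ≤ e := by
      simp only [ea, ep, eb, eq]
      exact le_abs_self _
    refine le_trans (emden_anti (fun t => p t ^ 2 + q t ^ 2 / 2 + ξ ^ 2 / a t ^ 2 +
      lam * F (a t ^ 2 * b t)) (fun _ => 0) s hs ?_ (fun _ _ => le_rfl) t ht) h0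
    intro t ht
    obtain ⟨hat, hbt⟩ := hpos t ht
    have h1 := (hdp t ht).pow 2
    have h2 := ((hdq t ht).pow 2).div_const 2
    have h3 := ((hasDerivWithinAt_const t (Icc 0 s) (ξ ^ 2)).div ((hda t ht).pow 2)
      (pow_ne_zero 2 hat.ne'))
    have h4 := ((hF (a t ^ 2 * b t) (by positivity)).comp_hasDerivWithinAt t
      (((hda t ht).pow 2).mul (hdb t ht))).const_mul lam
    refine (((h1.add h2).add h3).add h4).congr_deriv ?_
    have e1 : (a t ^ 2 * b t) ^ (-γ) = ((a t ^ γ) ^ 2 * b t ^ γ)⁻¹ := by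
      rw [Real.rpow_neg (by positivity), Real.mul_rpow (by positivity) hbt.le,
        ← Real.rpow_natCast (a t) 2, ← Real.rpow_mul hat.le, mul_comm _ γ, Real.rpow_mul hat.le,
        Real.rpow_natCast]
    have e2 : a t ^ (2 * γ - 1) = (a t ^ γ) ^ 2 / a t := by
      rw [Real.rpow_sub hat, Real.rpow_one, mul_comm, Real.rpow_mul hat.le]
      norm_num
    have e3 : a t ^ (2 * γ - 2) = (a t ^ γ) ^ 2 / a t ^ 2 := by
      rw [Real.rpow_sub hat, mul_comm, Real.rpow_mul hat.le]
      norm_num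
    have e4 : b t ^ (γ - 1) = b t ^ γ / b t := by
      rw [Real.rpow_sub hbt, Real.rpow_one]
    simp only [Pi.pow_apply]
    rw [e1, e2, e3, e4]
    have : 0 < a t ^ γ := by positivity
    have : 0 < b t ^ γ := by positivity
    field_simp
    ring
  have hlogbd : ∀ t ∈ Icc 0 s, p t ^ 2 + q t ^ 2 / 2 + ξ ^ 2 / a t ^ 2
      ≤ e + 2 * lam * (a t + b t) := by
    intro t ht
    obtain ⟨hat, hbt⟩ := hpos t ht
    have h1 := energy t ht
    have h2 := hFlog (a t ^ 2 * b t) (by positivity)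
    rw [Real.log_mul (by positivity) hbt.ne', Real.log_pow] at h2
    have h3 := Real.log_le_sub_one_of_pos hat
    have h4 := Real.log_le_sub_one_of_pos hbt
    push_cast at h2
    have h5 : -(2 * (a t + b t)) ≤ F (a t ^ 2 * b t) := by linarith
    nlinarith [mul_le_mul_of_nonneg_left h5 hlam.le]
  have hgr : ∀ t ∈ Icc 0 s, a t + b t ≤ M := by
    intro t ht
    have h := emden_anti (fun t => (a t + b t + (2 + e) / (2 * lam)) * Real.exp (-(2 * lam * t)))
      _ s hs (fun t ht => (((hda t ht).add (hdb t ht)).add_const _).mul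
        ((((hasDerivAt_id t).const_mul (2 * lam)).neg.exp).hasDerivWithinAt)) ?_ t ht
    · simp only [ea, eb, mul_zero, neg_zero, Real.exp_zero, mul_one] at h
      rw [Real.exp_neg, ← div_eq_mul_inv, div_le_iff₀ (Real.exp_pos _)] at h
      have h2 : Real.exp (2 * lam * t) ≤ Real.exp (2 * lam * T) := by
        apply Real.exp_le_exp.2
        have := ht.2.trans hsT
        gcongr
      have h3 : D * Real.exp (2 * lam * t) ≤ M := by rw [hM]; gcongr
      have h4 : 0 < (2 + e) / (2 * lam) := by positivity
      linarith
    · intro t ht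
      have hb := hlogbd t ht
      obtain ⟨hat, hbt⟩ := hpos t ht
      have h4 : 0 < ξ ^ 2 / a t ^ 2 := by positivity
      have h5 : (2 * lam) * ((2 + e) / (2 * lam)) = 2 + e := by field_simp
      have h6 : p t + q t - 2 * lam * (a t + b t + (2 + e) / (2 * lam)) ≤ 0 := by
        rw [mul_add, h5]
        nlinarith [sq_nonneg (p t - 1 / 2), sq_nonneg (q t - 1)]
      have h7 := mul_nonpos_of_nonpos_of_nonneg h6 (Real.exp_pos (-(2 * lam * t))).le
      simp only [id, Pi.neg_apply, Pi.add_apply]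
      linarith
  have hss : s ∈ Icc 0 s := ⟨hs, le_rfl⟩
  obtain ⟨has, hbs⟩ := hpos s hss
  have hy := hgr s hss
  have hb1 : p s ^ 2 + q s ^ 2 / 2 + ξ ^ 2 / a s ^ 2 ≤ P :=
    (hlogbd s hss).trans (by rw [hP]; gcongr)
  have hEn := energy s hss
  have q1 : 0 < ξ ^ 2 / a s ^ 2 := by positivity
  have q2 : 0 < P / ξ ^ 2 := by positivity
  have q3 : 0 < M ^ 2 * Real.exp (e / lam) := by positivity
  have q4 := sq_nonneg (p s)
  have q5 := sq_nonneg (q s)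
  refine ⟨?_, by linarith, ?_, ?_, by linarith, ?_⟩
  · apply inv_lt_of_inv_lt₀ has
    have h1 : (a s)⁻¹ ^ 2 ≤ P / ξ ^ 2 := by
      rw [le_div_iff₀ hξ2]
      have : (a s)⁻¹ ^ 2 * ξ ^ 2 = ξ ^ 2 / a s ^ 2 := by field_simp
      linarith
    nlinarith [sq_nonneg ((a s)⁻¹ - 1 / 2)]
  · rw [abs_lt]
    constructor <;> nlinarith [sq_nonneg (p s - 1 / 2), sq_nonneg (p s + 1 / 2)]
  · apply inv_lt_of_inv_lt₀ hbs
    have h1 := hFlog (a s ^ 2 * b s) (by positivity)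
    have h2 : lam * F (a s ^ 2 * b s) ≤ e := by linarith
    have h3 : F (a s ^ 2 * b s) ≤ e / lam := by rw [le_div_iff₀ hlam]; linarith
    have h4 : -Real.log (a s ^ 2 * b s) ≤ e / lam := h1.trans h3
    rw [← Real.log_inv, Real.log_le_iff_le_exp (by positivity)] at h4
    have h5 : (b s)⁻¹ = a s ^ 2 * (a s ^ 2 * b s)⁻¹ := by field_simp
    have h6 : a s ≤ M := by linarith
    have h7 : (b s)⁻¹ ≤ M ^ 2 * Real.exp (e / lam) := by
      rw [h5]; gcongr
    linarith
  · rw [abs_lt]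
    constructor <;> nlinarith [sq_nonneg (q s - 1 / 2), sq_nonneg (q s + 1 / 2)]

lemma emden_lip_prod {X Y : Type*} [PseudoEMetricSpace X] [PseudoEMetricSpace Y]
    {f : X → X} {g : Y → Y} (hf : LipschitzWith 1 f) (hg : LipschitzWith 1 g) :
    LipschitzWith 1 (Prod.map f g) := by
  have h1 := hf.comp (LipschitzWith.prod_fst (α := X) (β := Y))
  have h2 := hg.comp (LipschitzWith.prod_snd (α := X) (β := Y))
  have := h1.prodMk h2
  simp only [mul_one, max_self] at this
  exact this

/-- The clipping map onto an interval. -/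
def emdenClip (l u x : ℝ) : ℝ := max l (min u x)

lemma emdenClip_lip (l u : ℝ) : LipschitzWith 1 (emdenClip l u) :=
  (LipschitzWith.id.const_min u).const_max l

lemma emdenClip_mem (l u x : ℝ) (h : l ≤ u) : emdenClip l u x ∈ Icc l u :=
  ⟨le_max_left _ _, max_le h (min_le_left _ _)⟩

lemma emdenClip_id (l u x : ℝ) (h : x ∈ Icc l u) : emdenClip l u x = x := by
  rw [emdenClip, min_eq_right h.2, max_eq_right h.1]

/-- The box of admissible states. -/
def emdenBox (R : ℝ) : Set (ℝ × ℝ × ℝ × ℝ) :=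
  Icc R⁻¹ R ×ˢ Icc (-R) R ×ˢ Icc R⁻¹ R ×ˢ Icc (-R) R

/-- The vector field of the first-order Emden system. -/
noncomputable def emdenField (ξ lam γ : ℝ) (x : ℝ × ℝ × ℝ × ℝ) : ℝ × ℝ × ℝ × ℝ :=
  (x.2.1, ξ ^ 2 / x.1 ^ 3 + lam / (x.1 ^ (2 * γ - 1) * x.2.2.1 ^ (γ - 1)),
    x.2.2.2, lam / (x.1 ^ (2 * γ - 2) * x.2.2.1 ^ γ))

lemma emdenField_contDiffOn (ξ lam γ R : ℝ) (hR : 1 ≤ R) :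
    ContDiffOn ℝ 1 (emdenField ξ lam γ) (emdenBox R) := by
  intro x hx
  obtain ⟨h1, h2, h3, h4⟩ := hx
  have hR' : 0 < R⁻¹ := by positivity
  have ha : 0 < x.1 := hR'.trans_le h1.1
  have hb : 0 < x.2.2.1 := hR'.trans_le h3.1
  have ca : ContDiffAt ℝ 1 (fun x : ℝ × ℝ × ℝ × ℝ => x.1) x := by fun_prop
  have cb : ContDiffAt ℝ 1 (fun x : ℝ × ℝ × ℝ × ℝ => x.2.2.1) x := by fun_prop
  apply ContDiffAt.contDiffWithinAt
  unfold emdenField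
  refine ContDiffAt.prodMk (by fun_prop) (ContDiffAt.prodMk ?_ (ContDiffAt.prodMk (by fun_prop) ?_))
  · refine (contDiffAt_const.div (ca.pow 3) (by positivity)).add
      (contDiffAt_const.div ((ca.rpow_const_of_ne ha.ne').mul (cb.rpow_const_of_ne hb.ne')) ?_)
    positivity
  · refine contDiffAt_const.div ((ca.rpow_const_of_ne ha.ne').mul (cb.rpow_const_of_ne hb.ne')) ?_
    positivity

lemma emdenBox_mono {R S : ℝ} (hR : 1 ≤ R) (h : R ≤ S) : emdenBox R ⊆ emdenBox S := by
  have : S⁻¹ ≤ R⁻¹ := by gcongr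
  unfold emdenBox
  gcongr

lemma emdenBox_compact (R : ℝ) : IsCompact (emdenBox R) :=
  isCompact_Icc.prod (isCompact_Icc.prod (isCompact_Icc.prod isCompact_Icc))

lemma emdenBox_convex (R : ℝ) : Convex ℝ (emdenBox R) :=
  (convex_Icc _ _).prod ((convex_Icc _ _).prod ((convex_Icc _ _).prod (convex_Icc _ _)))

lemma emden_first_order (ξ lam γ a₀ a₁ b₀ b₁ : ℝ)
    (hξ : ξ ≠ 0) (hγ : 1 ≤ γ) (hlam : 0 < lam) (ha₀ : 0 < a₀) (hb₀ : 0 < b₀) :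
    ∃ x : ℝ → ℝ × ℝ × ℝ × ℝ, x 0 = (a₀, a₁, b₀, b₁) ∧
      ∀ t, 0 ≤ t → (0 < (x t).1 ∧ 0 < (x t).2.2.1) ∧
        HasDerivWithinAt x (emdenField ξ lam γ (x t)) (Ici 0) t := by
  choose R₀ hR₀ hap using fun n : ℕ => emden_apriori ξ lam γ a₀ a₁ b₀ b₁ hξ hγ hlam ha₀ hb₀ n
  set S : ℝ := a₀ + a₀⁻¹ + |a₁| + b₀ + b₀⁻¹ + |b₁| with hS
  set R : ℕ → ℝ := fun n => partialSups R₀ n + S with hRdef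
  have hS0 : 0 ≤ S := by positivity
  have hRmono : Monotone R := fun m n h => by
    simp only [hRdef]
    gcongr
  have hRR₀ : ∀ n, R₀ n ≤ R n := fun n => by
    have := le_partialSups R₀ n
    simp only [hRdef]
    linarith
  have hR1 : ∀ n, 1 ≤ R n := fun n => (hR₀ n).trans (hRR₀ n)
  have hRS : ∀ n, S ≤ R n := fun n => by
    have := (hR₀ n).trans (le_partialSups R₀ n)
    simp only [hRdef]
    linarith
  choose C hC using fun n => (emdenField_contDiffOn ξ lam γ (R n) (hR1 n)).exists_lipschitzOnWith
    one_ne_zero (emdenBox_convex _) (emdenBox_compact _)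
  have hglue := emden_glue (emdenField ξ lam γ) (fun n => emdenBox (R n)) C
    (fun m n h => emdenBox_mono (hR1 m) (hRmono h)) hC (a₀, a₁, b₀, b₁)
  suffices hsol : _ by
    obtain ⟨x, hx0, hx⟩ := hglue hsol
    refine ⟨x, hx0, fun t ht => ⟨?_, (hx t ht).2⟩⟩
    obtain ⟨⟨n, h1, h2, h3, h4⟩, _⟩ := hx t ht
    have hR' : 0 < (R n)⁻¹ := by have := hR1 n; positivity
    exact ⟨hR'.trans_le h1.1, hR'.trans_le h3.1⟩
  intro n
  have hRp : 0 < R n := one_pos.trans_le (hR1 n)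
  have hR' : 0 < (R n)⁻¹ := by positivity
  have hle : (R n)⁻¹ ≤ R n := (inv_le_one_of_one_le₀ (hR1 n)).trans (hR1 n)
  have hle' : - R n ≤ R n := by linarith
  obtain ⟨B, hB⟩ := (emdenBox_compact (R n)).exists_bound_of_continuousOn
    (emdenField_contDiffOn ξ lam γ (R n) (hR1 n)).continuousOn
  have hsn := hRS n
  have p1 : 0 < a₀⁻¹ := by positivity
  have p2 : 0 < b₀⁻¹ := by positivity
  have p3 := abs_nonneg a₁
  have p4 := abs_nonneg b₁
  refine emden_trunc _ _ (Prod.map (emdenClip (R n)⁻¹ (R n)) (Prod.map (emdenClip (-R n) (R n))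
    (Prod.map (emdenClip (R n)⁻¹ (R n)) (emdenClip (-R n) (R n))))) (C n) B.toNNReal n
    (Nat.cast_nonneg n) (emdenBox_compact _).isClosed (hC n)
    (fun x hx => (hB x hx).trans (Real.le_coe_toNNReal B)) ?_ ?_ ?_ _ ?_ ?_
  · exact emden_lip_prod (emdenClip_lip _ _) (emden_lip_prod (emdenClip_lip _ _)
      (emden_lip_prod (emdenClip_lip _ _) (emdenClip_lip _ _)))
  · intro x
    exact ⟨emdenClip_mem _ _ _ hle, emdenClip_mem _ _ _ hle', emdenClip_mem _ _ _ hle,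
      emdenClip_mem _ _ _ hle'⟩
  · rintro ⟨a, p, b, q⟩ ⟨h1, h2, h3, h4⟩
    simp only [Prod.map_apply]
    rw [emdenClip_id _ _ _ h1, emdenClip_id _ _ _ h2, emdenClip_id _ _ _ h3,
      emdenClip_id _ _ _ h4]
  · refine ⟨⟨?_, ?_⟩, abs_le.1 ?_, ⟨?_, ?_⟩, abs_le.1 ?_⟩
    · exact inv_le_of_inv_le₀ ha₀ (by linarith)
    · simp only; linarith
    · simp only; linarith
    · exact inv_le_of_inv_le₀ hb₀ (by linarith)
    · simp only; linarith
    · simp only; linarith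
  · intro x s hs hsn' hx0 hxK hd
    have hbd := hap n (fun t => (x t).1) (fun t => (x t).2.1) (fun t => (x t).2.2.1)
      (fun t => (x t).2.2.2) s hs hsn' (by simp [hx0]) (by simp [hx0]) (by simp [hx0])
      (by simp [hx0]) ?_ ?_ ?_ ?_ ?_
    · obtain ⟨h1, h2, h3, h4, h5, h6⟩ := hbd
      have hi : (R n)⁻¹ ≤ (R₀ n)⁻¹ := by
        have := hR₀ n
        have := hRR₀ n
        gcongr
      have hl := hRR₀ n
      refine prod_mem_nhds (Icc_mem_nhds (hi.trans_lt h1) (h2.trans_le hl))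
        (prod_mem_nhds (Icc_mem_nhds (abs_lt.1 (h3.trans_le hl)).1 (abs_lt.1 (h3.trans_le hl)).2)
        (prod_mem_nhds (Icc_mem_nhds (hi.trans_lt h4) (h5.trans_le hl))
        (Icc_mem_nhds (abs_lt.1 (h6.trans_le hl)).1 (abs_lt.1 (h6.trans_le hl)).2)))
    · intro t ht
      obtain ⟨h1, h2, h3, h4⟩ := hxK t ht
      exact ⟨hR'.trans_le h1.1, hR'.trans_le h3.1⟩
    · exact fun t ht => (hd t ht).fst
    · exact fun t ht => (hd t ht).snd.fst
    · exact fun t ht => (hd t ht).snd.snd.fst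
    · exact fun t ht => (hd t ht).snd.snd.snd

lemma emden_c2 (a p r : ℝ → ℝ) (h1 : ∀ t, 0 ≤ t → HasDerivWithinAt a (p t) (Ici 0) t)
    (h2 : ∀ t, 0 ≤ t → HasDerivWithinAt p (r t) (Ici 0) t) (hr : ContinuousOn r (Ici 0)) :
    ContDiffOn ℝ 2 a (Ici 0) ∧ (∀ t ∈ Ici (0 : ℝ), derivWithin a (Ici 0) t = p t) ∧
      ∀ t ∈ Ici (0 : ℝ), derivWithin (derivWithin a (Ici 0)) (Ici 0) t = r t := by
  have hu : UniqueDiffOn ℝ (Ici (0 : ℝ)) := uniqueDiffOn_Ici 0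
  have e1 : ∀ t ∈ Ici (0 : ℝ), derivWithin a (Ici 0) t = p t :=
    fun t ht => (h1 t ht).derivWithin (hu t ht)
  have e2 : ∀ t ∈ Ici (0 : ℝ), derivWithin p (Ici 0) t = r t :=
    fun t ht => (h2 t ht).derivWithin (hu t ht)
  refine ⟨?_, e1, fun t ht => ?_⟩
  · rw [show (2 : WithTop ℕ∞) = 1 + 1 by norm_num, contDiffOn_succ_iff_derivWithin hu]
    refine ⟨fun t ht => (h1 t ht).differentiableWithinAt, by simp, ?_⟩
    refine ContDiffOn.congr ?_ e1
    rw [contDiffOn_one_iff_derivWithin hu]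
    exact ⟨fun t ht => (h2 t ht).differentiableWithinAt, hr.congr e2⟩
  · rw [derivWithin_congr e1 (e1 t ht), e2 t ht]



/-- Global existence for the Emden dynamical system when λ > 0:
    for ξ ≠ 0, γ ≥ 1, λ > 0, a₀ > 0, b₀ > 0 there exist positive C² functions
    a, b on [0,∞) solving a'' − ξ²/a³ = λ/(a^{2γ−1} b^{γ−1}),
    b'' = λ/(a^{2γ−2} b^γ) with a(0) = a₀, a'(0) = a₁, b(0) = b₀, b'(0) = b₁.
    (Here `lam` denotes λ; derivatives on [0,∞) are `derivWithin`.) -/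
theorem emden_system_global_existence_lambda_pos
    (ξ lam γ a₀ a₁ b₀ b₁ : ℝ)
    (hξ : ξ ≠ 0) (hγ : 1 ≤ γ) (hlam : 0 < lam) (ha₀ : 0 < a₀) (hb₀ : 0 < b₀) :
    ∃ a b : ℝ → ℝ,
      ContDiffOn ℝ 2 a (Set.Ici 0) ∧ ContDiffOn ℝ 2 b (Set.Ici 0) ∧
      (∀ t ∈ Set.Ici (0 : ℝ), 0 < a t ∧ 0 < b t) ∧
      (∀ t ∈ Set.Ici (0 : ℝ),
        derivWithin (derivWithin a (Set.Ici 0)) (Set.Ici 0) t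
          - ξ ^ 2 / (a t) ^ 3
          = lam / ((a t) ^ (2 * γ - 1) * (b t) ^ (γ - 1))) ∧
      (∀ t ∈ Set.Ici (0 : ℝ),
        derivWithin (derivWithin b (Set.Ici 0)) (Set.Ici 0) t
          = lam / ((a t) ^ (2 * γ - 2) * (b t) ^ γ)) ∧
      a 0 = a₀ ∧ derivWithin a (Set.Ici 0) 0 = a₁ ∧
      b 0 = b₀ ∧ derivWithin b (Set.Ici 0) 0 = b₁ := by
  obtain ⟨x, hx0, hx⟩ := emden_first_order ξ lam γ a₀ a₁ b₀ b₁ hξ hγ hlam ha₀ hb₀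
  have da : ∀ t, 0 ≤ t → HasDerivWithinAt (fun t => (x t).1) ((x t).2.1) (Ici 0) t :=
    fun t ht => (hx t ht).2.fst
  have dp : ∀ t, 0 ≤ t → HasDerivWithinAt (fun t => (x t).2.1) (ξ ^ 2 / (x t).1 ^ 3 +
      lam / ((x t).1 ^ (2 * γ - 1) * (x t).2.2.1 ^ (γ - 1))) (Ici 0) t :=
    fun t ht => (hx t ht).2.snd.fst
  have db : ∀ t, 0 ≤ t → HasDerivWithinAt (fun t => (x t).2.2.1) ((x t).2.2.2) (Ici 0) t :=
    fun t ht => (hx t ht).2.snd.snd.fst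
  have dq : ∀ t, 0 ≤ t → HasDerivWithinAt (fun t => (x t).2.2.2)
      (lam / ((x t).1 ^ (2 * γ - 2) * (x t).2.2.1 ^ γ)) (Ici 0) t :=
    fun t ht => (hx t ht).2.snd.snd.snd
  have ca : ContinuousOn (fun t => (x t).1) (Ici 0) := fun t ht => (da t ht).continuousWithinAt
  have cb : ContinuousOn (fun t => (x t).2.2.1) (Ici 0) :=
    fun t ht => (db t ht).continuousWithinAt
  have pos : ∀ t ∈ Ici (0 : ℝ), 0 < (x t).1 ∧ 0 < (x t).2.2.1 := fun t ht => (hx t ht).1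
  have ra : ∀ c : ℝ, ContinuousOn (fun t => (x t).1 ^ c) (Ici 0) :=
    fun c => ca.rpow_const (fun t ht => Or.inl (pos t ht).1.ne')
  have rb : ∀ c : ℝ, ContinuousOn (fun t => (x t).2.2.1 ^ c) (Ici 0) :=
    fun c => cb.rpow_const (fun t ht => Or.inl (pos t ht).2.ne')
  obtain ⟨A1, A2, A3⟩ := emden_c2 _ _ _ da dp (by
    refine (continuousOn_const.div (ca.pow 3) ?_).add
      (continuousOn_const.div ((ra _).mul (rb _)) ?_)
    · intro t ht
      exact pow_ne_zero 3 (pos t ht).1.ne'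
    · intro t ht
      obtain ⟨h1, h2⟩ := pos t ht
      positivity)
  obtain ⟨B1, B2, B3⟩ := emden_c2 _ _ _ db dq (by
    refine continuousOn_const.div ((ra _).mul (rb _)) ?_
    intro t ht
    obtain ⟨h1, h2⟩ := pos t ht
    positivity)
  refine ⟨_, _, A1, B1, pos, fun t ht => ?_, fun t ht => B3 t ht, by simp [hx0], ?_,
    by simp [hx0], ?_⟩
  · rw [A3 t ht]; ring
  · rw [A2 0 self_mem_Ici]; simp [hx0]
  · rw [B2 0 self_mem_Ici]; simp [hx0]
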